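/- arXiv:2205.11153 — 3 statements merged into one kernel-verified Lean document; each statement's English description precedes it below -/
import Mathlib

section
/- Let W be a real n × r matrix, V a real m × r matrix, g : Fin r → ℝ → ℝ a family of univariate functions differentiable on ℝ, and let p : Fin N → ℝ^m be a family of N operating points. Define f : ℝ^m → ℝ^n by f(q) o = ∑_i W o i * g i (∑_ℓ V ℓ i * q ℓ), and define the three-way array 𝒥 : Fin n → Fin m → Fin N → ℝ by 𝒥 o ℓ k = (the (o,ℓ) entry of the Jacobian matrix of f at p k). Then 𝒥 admits the rank-r polyadic decomposition 𝒥 o ℓ k = ∑_{i=1}^r W o i * V ℓ i * G' k i, where G' k i = (deriv (g i)) (∑_ℓ V ℓ i * (p k) ℓ). -/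
/-!
Column by column, `W g(Vᵀ q) = ∑ i, g i (vᵢ ⬝ᵥ q) • wᵢ`. By the chain rule its derivative is a sum
of rank-one operators `(g i)'(vᵢ ⬝ᵥ q) • wᵢ vᵢᵀ`, in which only the scalar weights depend on the
operating point; stacking over operating points therefore adds just the factor `G'`.
-/

open scoped Matrix

variable {𝕜 R E F ι m n : Type*} [NontriviallyNormedField 𝕜]

section RankOneSum

variable [NormedAddCommGroup E] [NormedSpace 𝕜 E] [NormedAddCommGroup F] [NormedSpace 𝕜 F]

theorem hasFDerivAt_sum_comp_smul (s : Finset ι) {g : ι → 𝕜 → 𝕜} {g' : ι → 𝕜} {φ : ι → E → 𝕜}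
    {φ' : ι → E →L[𝕜] 𝕜} {x : E} (w : ι → F)
    (hg : ∀ i ∈ s, HasDerivAt (g i) (g' i) (φ i x)) (hφ : ∀ i ∈ s, HasFDerivAt (φ i) (φ' i) x) :
    HasFDerivAt (fun y => ∑ i ∈ s, g i (φ i y) • w i)
      (∑ i ∈ s, (g' i • φ' i).smulRight (w i)) x :=
  HasFDerivAt.fun_sum fun i hi => ((hg i hi).comp_hasFDerivAt x (hφ i hi)).smul_const (w i)

end RankOneSum

section Decoupled

variable [Fintype ι] [Fintype m]

/-- The linear form `q ↦ v ⬝ᵥ q` as a continuous linear map: the derivative of a coordinate of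
`q ↦ Vᵀ q` is the form of the corresponding column of `V`. -/
def dotProductCLM [CommSemiring R] [TopologicalSpace R] [IsTopologicalSemiring R] (v : m → R) :
    (m → R) →L[R] R where
  toLinearMap := dotProductBilin R R v
  cont := continuous_const.dotProduct continuous_id

theorem dotProductCLM_apply [CommSemiring R] [TopologicalSpace R] [IsTopologicalSemiring R]
    (v q : m → R) : dotProductCLM v q = v ⬝ᵥ q := rfl

/-- The decoupled function `q ↦ W g(Vᵀ q)`, with the branch functions `g i` acting
componentwise on `Vᵀ q`. -/
def decoupledMap [NonUnitalNonAssocSemiring R] (W : Matrix n ι R) (V : Matrix m ι R)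
    (g : ι → R → R) (q : m → R) : n → R :=
  W *ᵥ fun i => g i (V.col i ⬝ᵥ q)

theorem decoupledMap_eq_sum [NonUnitalCommSemiring R] (W : Matrix n ι R) (V : Matrix m ι R)
    (g : ι → R → R) :
    decoupledMap W V g = fun q => ∑ i, g i (V.col i ⬝ᵥ q) • W.col i := by
  funext q
  simp only [decoupledMap, Matrix.mulVec_eq_sum, op_smul_eq_smul, Matrix.col_def]

variable [Finite n] (W : Matrix n ι 𝕜) {V : Matrix m ι 𝕜} {g : ι → 𝕜 → 𝕜} {g' : ι → 𝕜}
  {q : m → 𝕜}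

theorem hasFDerivAt_decoupledMap (hg : ∀ i, HasDerivAt (g i) (g' i) (V.col i ⬝ᵥ q)) :
    HasFDerivAt (decoupledMap W V g)
      (∑ i, (g' i • dotProductCLM (V.col i)).smulRight (W.col i)) q := by
  have := Fintype.ofFinite n
  rw [decoupledMap_eq_sum]
  exact hasFDerivAt_sum_comp_smul _ _ (fun i _ => hg i)
    fun i _ => (dotProductCLM (V.col i)).hasFDerivAt

theorem fderiv_decoupledMap_single [DecidableEq m]
    (hg : ∀ i, HasDerivAt (g i) (g' i) (V.col i ⬝ᵥ q)) (o : n) (ℓ : m) :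
    fderiv 𝕜 (decoupledMap W V g) q (Pi.single ℓ 1) o = ∑ i, W o i * V ℓ i * g' i := by
  have rank_one_entry (i : ι) :
      (g' i • dotProductCLM (V.col i)).smulRight (W.col i) (Pi.single ℓ 1) o
        = W o i * V ℓ i * g' i := by
    simp only [ContinuousLinearMap.smulRight_apply, smul_apply, dotProductCLM_apply,
      dotProduct_single_one, Matrix.col_apply, Pi.smul_apply, smul_eq_mul]
    ring
  simp only [(hasFDerivAt_decoupledMap W hg).fderiv, sum_apply, Finset.sum_apply,
    rank_one_entry]

theorem jacobian_tensor_polyadic_decomposition_general {κ : Type*} [DecidableEq m]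
    (W : Matrix n ι 𝕜) (V : Matrix m ι 𝕜) (g : ι → 𝕜 → 𝕜) (p : κ → m → 𝕜)
    (f : (m → 𝕜) → n → 𝕜) (hf : ∀ q o, f q o = ∑ i, W o i * g i (∑ ℓ, V ℓ i * q ℓ))
    (𝒥 : n → m → κ → 𝕜) (h𝒥 : ∀ o ℓ k, 𝒥 o ℓ k = fderiv 𝕜 f (p k) (Pi.single ℓ 1) o)
    (G' : Matrix κ ι 𝕜) (hG' : ∀ k i, HasDerivAt (g i) (G' k i) (∑ ℓ, V ℓ i * p k ℓ)) :
    ∀ o ℓ k, 𝒥 o ℓ k = ∑ i, W o i * V ℓ i * G' k i := by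
  intro o ℓ k
  obtain rfl : f = decoupledMap W V g := funext₂ hf
  exact (h𝒥 o ℓ k).trans (fderiv_decoupledMap_single W (hG' k) o ℓ)

end Decoupled

/-- The Jacobian tensor of a decoupled function `f(p) = W g(Vᵀ p)`, stacked over
`N` operating points, admits the rank-`r` polyadic decomposition
`𝒥 o ℓ k = ∑ i, W o i * V ℓ i * G' k i` with `G' k i = (g i)'(z_i(p k))`. -/
theorem jacobian_tensor_polyadic_decomposition
    (n m r N : ℕ) (W : Matrix (Fin n) (Fin r) ℝ) (V : Matrix (Fin m) (Fin r) ℝ)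
    (g : Fin r → ℝ → ℝ) (hg : ∀ i, Differentiable ℝ (g i))
    (p : Fin N → (Fin m → ℝ))
    (f : (Fin m → ℝ) → (Fin n → ℝ))
    (hf : ∀ q o, f q o = ∑ i, W o i * g i (∑ ℓ, V ℓ i * q ℓ))
    (𝒥 : Fin n → Fin m → Fin N → ℝ)
    (h𝒥 : ∀ o ℓ k, 𝒥 o ℓ k = fderiv ℝ f (p k) (Pi.single ℓ 1) o)
    (G' : Matrix (Fin N) (Fin r) ℝ)
    (hG' : ∀ k i, G' k i = deriv (g i) (∑ ℓ, V ℓ i * p k ℓ)) :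
    ∀ o ℓ k, 𝒥 o ℓ k = ∑ i, W o i * V ℓ i * G' k i :=
  jacobian_tensor_polyadic_decomposition_general W V g p f hf 𝒥 h𝒥 G'
    fun k i => hG' k i ▸ (hg i _).hasDerivAt
end

section
/- Let F : Fin r → Matrix (Fin N) (Fin N) ℝ be a family of r filters, let G be a real N × r matrix, let V be a real m × r matrix and W a real n × r matrix. Define the column-filtered matrix F ∘ G ∈ ℝ^{N×r} by (F ∘ G) k i = ∑_{k'} (F i) k k' * G k' i, the block-diagonal matrix blkdiag(F) ∈ ℝ^{(r·N)×(r·N)} by blkdiag(F) (i,k) (i',k') = (if i = i' then (F i) k k' else 0), and the Khatri-Rao product V ⊙ W ∈ ℝ^{(m·n)×r} by (V ⊙ W)(ℓ,o) i = V ℓ i * W o i. Then vec((F ∘ G)(V ⊙ W)ᵀ) = ((V ⊙ W) ⊗ I_N) · blkdiag(F) · vec(G); entrywise: for all ℓ, o, k, ((F ∘ G)(V ⊙ W)ᵀ) k (ℓ,o) = ∑_{i} ∑_{k''} V ℓ i * W o i * (F i) k k'' * G k'' i. -/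
open Kronecker

section

open Matrix

variable {R ι κ κ' μ ν : Type*}

/-- The Khatri–Rao product `A ⊙ B`, that is, the column-wise Kronecker product. -/
def khatriRao [Mul R] (A : Matrix μ ι R) (B : Matrix ν ι R) : Matrix (μ × ν) ι R :=
  of fun p c => A p.1 c * B p.2 c

theorem khatriRao_apply [Mul R] (A : Matrix μ ι R) (B : Matrix ν ι R) (p : μ × ν) (c : ι) :
    khatriRao A B p c = A p.1 c * B p.2 c :=
  rfl

theorem mul_khatriRao_transpose_apply [NonUnitalNonAssocCommSemiring R] [Fintype ι]
    (X : Matrix κ ι R) (A : Matrix μ ι R) (B : Matrix ν ι R) (k : κ) (ℓ : μ) (o : ν) :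
    (X * (khatriRao A B)ᵀ) k (ℓ, o) = ∑ i, A ℓ i * B o i * X k i := by
  simp only [mul_apply, transpose_apply, khatriRao_apply, mul_comm (X k _)]

/-- The column-filtered matrix `F ∘ G`, whose `i`-th column is the filter `F i` applied to the
`i`-th column of `G`. The filters may be rectangular. -/
def filterColumns [NonUnitalNonAssocSemiring R] [Fintype κ']
    (F : ι → Matrix κ κ' R) (G : Matrix κ' ι R) : Matrix κ ι R :=
  of fun k i => (F i *ᵥ G.col i) k

theorem filterColumns_apply [NonUnitalNonAssocSemiring R] [Fintype κ']
    (F : ι → Matrix κ κ' R) (G : Matrix κ' ι R) (k : κ) (i : ι) :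
    filterColumns F G k i = ∑ k', F i k k' * G k' i :=
  rfl

/-- The block-diagonal matrix `blkdiag(F)` with the block index as the first component, so that it
acts on `Matrix.vec`; in `Matrix.blockDiagonal` the block index is the second component. -/
def blkdiag [Zero R] [DecidableEq ι] (F : ι → Matrix κ κ' R) : Matrix (ι × κ) (ι × κ') R :=
  (blockDiagonal F).submatrix Prod.swap Prod.swap

theorem blkdiag_apply [Zero R] [DecidableEq ι] (F : ι → Matrix κ κ' R) (p : ι × κ) (q : ι × κ') :
    blkdiag F p q = if p.1 = q.1 then F p.1 p.2 q.2 else 0 :=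
  rfl

theorem vec_filterColumns [NonUnitalNonAssocSemiring R] [Fintype ι] [DecidableEq ι] [Fintype κ']
    (F : ι → Matrix κ κ' R) (G : Matrix κ' ι R) :
    vec (filterColumns F G) = blkdiag F *ᵥ vec G := by
  ext ⟨i, k⟩
  simp [filterColumns_apply, blkdiag_apply, mulVec, dotProduct, Fintype.sum_prod_type]

theorem vec_filterColumns_mul_transpose [CommSemiring R] [Fintype ι] [DecidableEq ι]
    [Fintype κ] [DecidableEq κ] [Fintype κ']
    (F : ι → Matrix κ κ' R) (G : Matrix κ' ι R) (H : Matrix μ ι R) :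
    vec (filterColumns F G * Hᵀ) = ((H ⊗ₖ (1 : Matrix κ κ R)) * blkdiag F) *ᵥ vec G :=
  calc
    vec (filterColumns F G * Hᵀ)
      = (H ⊗ₖ (1 : Matrix κ κ R)) *ᵥ vec (filterColumns F G) := by
        rw [kronecker_mulVec_vec, Matrix.one_mul]
    _ = ((H ⊗ₖ (1 : Matrix κ κ R)) * blkdiag F) *ᵥ vec G := by
        rw [vec_filterColumns, mulVec_mulVec]

theorem filtered_mode3_linear_in_G_general [CommSemiring R] [Fintype ι] [DecidableEq ι]
    [Fintype κ] [DecidableEq κ] [Fintype κ'] (F : ι → Matrix κ κ' R) (G : Matrix κ' ι R)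
    (V : Matrix μ ι R) (W : Matrix ν ι R) :
    vec (filterColumns F G * (khatriRao V W)ᵀ) =
        ((khatriRao V W ⊗ₖ (1 : Matrix κ κ R)) * blkdiag F) *ᵥ vec G ∧
      ∀ ℓ o k, (filterColumns F G * (khatriRao V W)ᵀ) k (ℓ, o) =
        ∑ i, ∑ k', V ℓ i * W o i * F i k k' * G k' i := by
  refine ⟨vec_filterColumns_mul_transpose F G (khatriRao V W), fun ℓ o k => ?_⟩
  simp only [mul_khatriRao_transpose_apply, filterColumns_apply, Finset.mul_sum, mul_assoc]

end

/-- Linearity of the filtered mode-3 model in `G`: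
`vec((F ∘ G)(V ⊙ W)ᵀ) = ((V ⊙ W) ⊗ I_N) · blkdiag(F) · vec(G)`, entrywise
`((F ∘ G)(V ⊙ W)ᵀ) k (ℓ,o) = ∑ i, ∑ k'', V ℓ i * W o i * (F i) k k'' * G k'' i`. -/
theorem filtered_mode3_linear_in_G
    (N r m n : ℕ) (F : Fin r → Matrix (Fin N) (Fin N) ℝ)
    (G : Matrix (Fin N) (Fin r) ℝ)
    (V : Matrix (Fin m) (Fin r) ℝ) (W : Matrix (Fin n) (Fin r) ℝ)
    (FG : Matrix (Fin N) (Fin r) ℝ)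
    (hFG : ∀ k i, FG k i = ∑ k', F i k k' * G k' i)
    (krVW : Matrix (Fin m × Fin n) (Fin r) ℝ)
    (hkr : ∀ ℓo i, krVW ℓo i = V ℓo.1 i * W ℓo.2 i)
    (blkdiagF : Matrix (Fin r × Fin N) (Fin r × Fin N) ℝ)
    (hblk : ∀ ik i'k', blkdiagF ik i'k' =
      if ik.1 = i'k'.1 then F ik.1 ik.2 i'k'.2 else 0)
    (vecG : Fin r × Fin N → ℝ) (hvecG : ∀ ik, vecG ik = G ik.2 ik.1) :
    ((fun x : (Fin m × Fin n) × Fin N => (FG * krVW.transpose) x.2 x.1) =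
        ((krVW ⊗ₖ (1 : Matrix (Fin N) (Fin N) ℝ)) * blkdiagF).mulVec vecG) ∧
    ∀ (ℓ : Fin m) (o : Fin n) (k : Fin N),
      (FG * krVW.transpose) k (ℓ, o) =
        ∑ i, ∑ k'', V ℓ i * W o i * F i k k'' * G k'' i := by
  obtain ⟨rfl, rfl, rfl, rfl⟩ : FG = filterColumns F G ∧ krVW = khatriRao V W ∧
      blkdiagF = blkdiag F ∧ vecG = G.vec :=
    ⟨Matrix.ext hFG, Matrix.ext hkr, Matrix.ext hblk, funext hvecG⟩
  exact filtered_mode3_linear_in_G_general F G V W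
end

section
/- Let J be a real N × (m·n) matrix (indexed by Fin N and Fin m × Fin n), let F_C, F_L, F_R : Fin r → Matrix (Fin N) (Fin N) ℝ be three families of filters, let G be a real N × r matrix, V a real m × r matrix, W a real n × r matrix, and λ ≥ 0. Then ‖J − (F_C ∘ G)(V ⊙ W)ᵀ‖_F² + λ · ‖(F_L ∘ G) − (F_R ∘ G)‖_F² = ‖b − K · vec(G)‖₂², where b is the vertical concatenation of vec(J) with the zero vector of length r·N, and K is the vertical stack of the two blocks ((V ⊙ W) ⊗ I_N) · blkdiag(F_C) and √λ · (blkdiag(F_L) − blkdiag(F_R)). In particular the regularized explicit-smoothness objective for updating G is a linear least-squares problem in vec(G). -/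
open Kronecker

/-!
Vectorization turns each linear operation on `G` into a matrix: column filtering becomes
`blkdiag(F)`, and right multiplication by `Aᵀ`, here with `A = V ⊙ W`, becomes `A ⊗ I`. The
objective is therefore a least-squares fit plus a quadratic penalty in the single unknown `vec(G)`,
and a penalty of weight `λ` is absorbed by stacking its matrix, scaled by `√λ`, below the design
matrix, with zeros below the data.
-/

section

open Matrix

variable {k l m n p r R : Type*}

/-- The column-filtering operation `F ∘ G`: the `i`-th filter matrix is applied to the `i`-th
column of `G`. The filters may be rectangular. -/
def columnFilter [NonUnitalNonAssocSemiring R] [Fintype n]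
    (F : r → Matrix m n R) (G : Matrix n r R) : Matrix m r R :=
  of fun k i ↦ ∑ k', F i k k' * G k' i

/-- The block-diagonal matrix `blkdiag(F)`, which represents column filtering by `F` on
vectorized matrices. It is `Matrix.blockDiagonal F` with the block index moved to the first
coordinate, in agreement with the (column, row) indexing of `Matrix.vec`. -/
def columnBlockDiagonal [DecidableEq r] [Zero R] (F : r → Matrix m n R) :
    Matrix (r × m) (r × n) R :=
  (blockDiagonal F).submatrix Prod.swap Prod.swap

theorem columnBlockDiagonal_mulVec_vec [NonUnitalNonAssocSemiring R] [Fintype n] [Fintype r]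
    [DecidableEq r] (F : r → Matrix m n R) (G : Matrix n r R) :
    columnBlockDiagonal F *ᵥ G.vec = (columnFilter F G).vec := by
  ext ⟨i, k⟩
  simp [columnBlockDiagonal, columnFilter, mulVec, dotProduct, blockDiagonal_apply, vec,
    Fintype.sum_prod_type_right]

theorem kronecker_one_mul_columnBlockDiagonal_mulVec_vec [CommSemiring R] [Fintype m] [Fintype n]
    [Fintype r] [DecidableEq m] [DecidableEq r]
    (A : Matrix l r R) (F : r → Matrix m n R) (G : Matrix n r R) :
    ((A ⊗ₖ (1 : Matrix m m R)) * columnBlockDiagonal F) *ᵥ G.vec =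
      (columnFilter F G * Aᵀ).vec := by
  rw [← mulVec_mulVec, columnBlockDiagonal_mulVec_vec, kronecker_mulVec_vec, Matrix.one_mul]

theorem sum_vec_sq [AddCommMonoid R] [Monoid R] [Fintype m] [Fintype n] (A : Matrix m n R) :
    ∑ x, A.vec x ^ 2 = ∑ i, ∑ j, A i j ^ 2 :=
  Fintype.sum_prod_type_right _

theorem sum_sq_add_mul_sum_sq_eq_sum_stacked_sq [Fintype k] [Fintype l] [Fintype p]
    (b : k → ℝ) (K : Matrix k l ℝ) (D : Matrix p l ℝ) (x : l → ℝ) {lam : ℝ} (hlam : 0 ≤ lam) :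
    ∑ i, (b - K *ᵥ x) i ^ 2 + lam * ∑ j, (D *ᵥ x) j ^ 2 =
      ∑ row, (Sum.elim b 0 row - (fromRows K (√lam • D) *ᵥ x) row) ^ 2 := by
  simp only [Fintype.sum_sum_type, fromRows_mulVec, Sum.elim_inl, Sum.elim_inr, smul_mulVec,
    Pi.sub_apply, Pi.zero_apply, Pi.smul_apply, smul_eq_mul, zero_sub, neg_sq, mul_pow,
    Real.sq_sqrt hlam, Finset.mul_sum]

theorem explicit_smoothness_objective_linear_in_G_general
    [Fintype l] [Fintype m] [Fintype n] [Fintype p] [Fintype r] [DecidableEq m] [DecidableEq r]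
    (J : Matrix m l ℝ) (FC : r → Matrix m n ℝ) (FL FR : r → Matrix p n ℝ)
    (G : Matrix n r ℝ) (A : Matrix l r ℝ) {lam : ℝ} (hlam : 0 ≤ lam) :
    (∑ k, ∑ j, (J k j - (columnFilter FC G * Aᵀ) k j) ^ 2) +
        lam * ∑ k, ∑ i, (columnFilter FL G k i - columnFilter FR G k i) ^ 2 =
      ∑ row, (Sum.elim J.vec 0 row -
        (fromRows ((A ⊗ₖ (1 : Matrix m m ℝ)) * columnBlockDiagonal FC)
          (√lam • (columnBlockDiagonal FL - columnBlockDiagonal FR)) *ᵥ G.vec) row) ^ 2 := by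
  rw [← sum_sq_add_mul_sum_sq_eq_sum_stacked_sq _ _ _ _ hlam,
    kronecker_one_mul_columnBlockDiagonal_mulVec_vec, sub_mulVec, columnBlockDiagonal_mulVec_vec,
    columnBlockDiagonal_mulVec_vec, ← vec_sub, ← vec_sub, sum_vec_sq, sum_vec_sq]
  simp only [Matrix.sub_apply]

end

/-- The regularized explicit-smoothness objective for updating `G` is a linear
least-squares problem in `vec(G)`:
`‖J − (F_C ∘ G)(V ⊙ W)ᵀ‖_F² + λ ‖(F_L ∘ G) − (F_R ∘ G)‖_F² = ‖b − K vec(G)‖₂²`,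
where `b` stacks `vec(J)` over the zero vector and `K` stacks the blocks
`((V ⊙ W) ⊗ I_N) blkdiag(F_C)` and `√λ (blkdiag(F_L) − blkdiag(F_R))`. -/
theorem explicit_smoothness_objective_linear_in_G
    (N m n r : ℕ) (J : Matrix (Fin N) (Fin m × Fin n) ℝ)
    (FC FL FR : Fin r → Matrix (Fin N) (Fin N) ℝ)
    (G : Matrix (Fin N) (Fin r) ℝ)
    (V : Matrix (Fin m) (Fin r) ℝ) (W : Matrix (Fin n) (Fin r) ℝ)
    (lam : ℝ) (hlam : 0 ≤ lam)
    (FCG FLG FRG : Matrix (Fin N) (Fin r) ℝ)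
    (hFCG : ∀ k i, FCG k i = ∑ k', FC i k k' * G k' i)
    (hFLG : ∀ k i, FLG k i = ∑ k', FL i k k' * G k' i)
    (hFRG : ∀ k i, FRG k i = ∑ k', FR i k k' * G k' i)
    (krVW : Matrix (Fin m × Fin n) (Fin r) ℝ)
    (hkr : ∀ ℓo i, krVW ℓo i = V ℓo.1 i * W ℓo.2 i)
    (blkdiagFC blkdiagFL blkdiagFR : Matrix (Fin r × Fin N) (Fin r × Fin N) ℝ)
    (hblkC : ∀ ik i'k', blkdiagFC ik i'k' =
      if ik.1 = i'k'.1 then FC ik.1 ik.2 i'k'.2 else 0)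
    (hblkL : ∀ ik i'k', blkdiagFL ik i'k' =
      if ik.1 = i'k'.1 then FL ik.1 ik.2 i'k'.2 else 0)
    (hblkR : ∀ ik i'k', blkdiagFR ik i'k' =
      if ik.1 = i'k'.1 then FR ik.1 ik.2 i'k'.2 else 0)
    (vecG : Fin r × Fin N → ℝ) (hvecG : ∀ ik, vecG ik = G ik.2 ik.1)
    (b : ((Fin m × Fin n) × Fin N) ⊕ (Fin r × Fin N) → ℝ)
    (hb1 : ∀ x : (Fin m × Fin n) × Fin N, b (Sum.inl x) = J x.2 x.1)
    (hb2 : ∀ y : Fin r × Fin N, b (Sum.inr y) = 0)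
    (K : Matrix (((Fin m × Fin n) × Fin N) ⊕ (Fin r × Fin N)) (Fin r × Fin N) ℝ)
    (hK1 : ∀ x col, K (Sum.inl x) col =
      ((krVW ⊗ₖ (1 : Matrix (Fin N) (Fin N) ℝ)) * blkdiagFC) x col)
    (hK2 : ∀ y col, K (Sum.inr y) col =
      Real.sqrt lam * (blkdiagFL - blkdiagFR) y col) :
    ((∑ k, ∑ ℓo, (J k ℓo - (FCG * krVW.transpose) k ℓo) ^ 2) +
        lam * ∑ k, ∑ i, (FLG k i - FRG k i) ^ 2) =
      ∑ row, (b row - K.mulVec vecG row) ^ 2 := by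
  obtain rfl : FCG = columnFilter FC G := Matrix.ext hFCG
  obtain rfl : FLG = columnFilter FL G := Matrix.ext hFLG
  obtain rfl : FRG = columnFilter FR G := Matrix.ext hFRG
  obtain rfl : blkdiagFC = columnBlockDiagonal FC := Matrix.ext hblkC
  obtain rfl : blkdiagFL = columnBlockDiagonal FL := Matrix.ext hblkL
  obtain rfl : blkdiagFR = columnBlockDiagonal FR := Matrix.ext hblkR
  obtain rfl : vecG = G.vec := funext hvecG
  obtain rfl : b = Sum.elim J.vec 0 := funext (Sum.rec hb1 hb2)
  obtain rfl : K = .fromRows ((krVW ⊗ₖ (1 : Matrix (Fin N) (Fin N) ℝ)) * columnBlockDiagonal FC)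
      (√lam • (columnBlockDiagonal FL - columnBlockDiagonal FR)) :=
    Matrix.ext (Sum.rec hK1 hK2)
  exact explicit_smoothness_objective_linear_in_G_general J FC FL FR G krVW hlam
end
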